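/- Let q : ℤ → (ℝ² → ℝ) be C³ functions satisfying the two-dimensional Toda lattice q_{xy}(j) = h(j) − h(j−1), where h(j) := exp(q(j+1) − q(j)) and b(j) := q_x(j). Let B¹, B², B³ : ℤ → (ℝ² → ℝ) be C¹ functions satisfying ∂_x b(j) = B¹(j) − B¹(j−1), ∂_y B¹(j) = ∂_x h(j), ∂_x B¹(j) = B¹(j)(b(j+1) − b(j)) + B²(j) − B²(j−1), ∂_y B²(j) = h(j) B¹(j+1) − h(j+1) B¹(j), ∂_x B²(j) = B²(j)(b(j+2) − b(j)) + B³(j) − B³(j−1), and ∂_y B³(j) = h(j) B²(j+1) − h(j+2) B²(j), for all j. Define F(j) := b(j)³ + B²(j) + B²(j−1) + B²(j−2) + B¹(j)(2b(j) + b(j+1)) + B¹(j−1)(2b(j) + b(j−1)). Then for all j ∈ ℤ: ∂_y ∂_x F(j) = h(j)(F(j+1) − F(j)) − h(j−1)(F(j) − F(j−1)). (This expresses that the third-order flow defines a symmetry of the Toda lattice.) -/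

import Mathlib

/-- Partial derivative in the first (x) variable. -/
noncomputable def pdx (f : ℝ × ℝ → ℝ) : ℝ × ℝ → ℝ :=
  fun p => deriv (fun t => f (t, p.2)) p.1

/-- Partial derivative in the second (y) variable. -/
noncomputable def pdy (f : ℝ × ℝ → ℝ) : ℝ × ℝ → ℝ :=
  fun p => deriv (fun t => f (p.1, t)) p.2

theorem hasDerivAt_pdx {f : ℝ × ℝ → ℝ} (hf : Differentiable ℝ f) (x y : ℝ) :
    HasDerivAt (fun t => f (t, y)) (pdx f (x, y)) x := by
  have : DifferentiableAt ℝ (fun t => f (t, y)) x := by fun_prop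
  exact this.hasDerivAt

theorem hasDerivAt_pdy {f : ℝ × ℝ → ℝ} (hf : Differentiable ℝ f) (x y : ℝ) :
    HasDerivAt (fun t => f (x, t)) (pdy f (x, y)) y := by
  have : DifferentiableAt ℝ (fun t => f (x, t)) y := by fun_prop
  exact this.hasDerivAt

theorem differentiable_pdx {f : ℝ × ℝ → ℝ} (hf : ContDiff ℝ 3 f) :
    Differentiable ℝ (pdx f) := by
  have h1 : pdx f = fun p => fderiv ℝ f p (1, 0) := by
    funext p
    have hd : HasFDerivAt f (fderiv ℝ f p) (p.1, p.2) :=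
      ((hf.differentiable (by norm_num)) p).hasFDerivAt
    have hc : HasDerivAt (fun t : ℝ => (t, p.2)) ((1 : ℝ), (0 : ℝ)) p.1 :=
      (hasDerivAt_id p.1).prodMk (hasDerivAt_const p.1 p.2)
    exact (hd.comp_hasDerivAt p.1 hc).deriv
  rw [h1]
  have h2 : ContDiff ℝ 1 (fderiv ℝ f) := hf.fderiv_right (by norm_num)
  have h3 : Differentiable ℝ (fderiv ℝ f) := h2.differentiable (by norm_num)
  fun_prop

/-- the third-order flow
`q_t(j) = b(j)³ + b⁽²⁾(j) + b⁽²⁾(j−1) + b⁽²⁾(j−2) + b⁽¹⁾(j)(2b(j) + b(j+1)) + b⁽¹⁾(j−1)(2b(j) + b(j−1))`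
defines a symmetry of the 2D Toda lattice. Here `B1, B2, B3` play the roles of the
nonlocal variables `b⁽¹⁾, b⁽²⁾, b⁽³⁾`. -/
theorem toda_third_order_symmetry
    (q h b : ℤ → ℝ × ℝ → ℝ)
    (hq : ∀ j, ContDiff ℝ 3 (q j))
    (hh : ∀ j p, h j p = Real.exp (q (j + 1) p - q j p))
    (hb : ∀ j, b j = pdx (q j))
    (toda : ∀ (j : ℤ) (p : ℝ × ℝ), pdy (pdx (q j)) p = h j p - h (j - 1) p)
    (B1 B2 B3 : ℤ → ℝ × ℝ → ℝ)
    (hB1 : ∀ j, ContDiff ℝ 1 (B1 j))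
    (hB2 : ∀ j, ContDiff ℝ 1 (B2 j))
    (hB3 : ∀ j, ContDiff ℝ 1 (B3 j))
    (e1 : ∀ (j : ℤ) (p : ℝ × ℝ), pdx (b j) p = B1 j p - B1 (j - 1) p)
    (e2 : ∀ (j : ℤ) (p : ℝ × ℝ), pdy (B1 j) p = pdx (h j) p)
    (e3 : ∀ (j : ℤ) (p : ℝ × ℝ),
        pdx (B1 j) p = B1 j p * (b (j + 1) p - b j p) + B2 j p - B2 (j - 1) p)
    (e4 : ∀ (j : ℤ) (p : ℝ × ℝ),
        pdy (B2 j) p = h j p * B1 (j + 1) p - h (j + 1) p * B1 j p)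
    (e5 : ∀ (j : ℤ) (p : ℝ × ℝ),
        pdx (B2 j) p = B2 j p * (b (j + 2) p - b j p) + B3 j p - B3 (j - 1) p)
    (e6 : ∀ (j : ℤ) (p : ℝ × ℝ),
        pdy (B3 j) p = h j p * B2 (j + 1) p - h (j + 2) p * B2 j p)
    (F : ℤ → ℝ × ℝ → ℝ)
    (hF : ∀ j p, F j p = (b j p) ^ 3 + B2 j p + B2 (j - 1) p + B2 (j - 2) p
        + B1 j p * (2 * b j p + b (j + 1) p)
        + B1 (j - 1) p * (2 * b j p + b (j - 1) p)) :
    ∀ (j : ℤ) (p : ℝ × ℝ),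
      pdy (pdx (F j)) p
        = h j p * (F (j + 1) p - F j p) - h (j - 1) p * (F j p - F (j - 1) p) := by
  have dq : ∀ j, Differentiable ℝ (q j) := fun j => (hq j).differentiable (by norm_num)
  have db : ∀ j, Differentiable ℝ (b j) := fun j => by
    rw [hb]; exact differentiable_pdx (hq j)
  have d1 : ∀ j, Differentiable ℝ (B1 j) := fun j => (hB1 j).differentiable (by norm_num)
  have d2 : ∀ j, Differentiable ℝ (B2 j) := fun j => (hB2 j).differentiable (by norm_num)
  have d3 : ∀ j, Differentiable ℝ (B3 j) := fun j => (hB3 j).differentiable (by norm_num)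
  have hx : ∀ j p, pdx (h j) p = h j p * (b (j + 1) p - b j p) := by
    rintro j ⟨x, y⟩
    have h1 := ((hasDerivAt_pdx (dq (j + 1)) x y).sub (hasDerivAt_pdx (dq j) x y)).exp
    have h3 : h j = fun p => Real.exp (q (j + 1) p - q j p) := funext (hh j)
    rw [h3, hb, hb]
    exact h1.deriv
  have bx := fun j x y => hasDerivAt_pdx (db j) x y
  have B1x := fun j x y => hasDerivAt_pdx (d1 j) x y
  have B2x := fun j x y => hasDerivAt_pdx (d2 j) x y
  have bY := fun j x y => hasDerivAt_pdy (db j) x y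
  have B1y := fun j x y => hasDerivAt_pdy (d1 j) x y
  have B2y := fun j x y => hasDerivAt_pdy (d2 j) x y
  have B3y := fun j x y => hasDerivAt_pdy (d3 j) x y
  simp only [e1, e3, e5] at bx B1x B2x
  have toda' : ∀ j p, pdy (b j) p = h j p - h (j - 1) p := fun j p => by rw [hb]; exact toda j p
  simp only [toda', e2, hx, e4, e6] at bY B1y B2y B3y
  rintro j ⟨x, y⟩
  have i1 : j - 1 + 1 = j := by ring
  have i2 : j - 2 + 1 = j - 1 := by ring
  have i3 : j - 2 + 2 = j := by ring
  have i4 : j - 1 + 2 = j + 1 := by ring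
  have i5 : j + 1 - 1 = j := by ring
  have i6 : j - 1 - 1 = j - 2 := by ring
  have i7 : j - 2 - 1 = j - 3 := by ring
  have i8 : j + 1 + 1 = j + 2 := by ring
  have i9 : j - 3 + 1 = j - 2 := by ring
  have i10 : j - 3 + 2 = j - 1 := by ring
  have i11 : j + 1 - 2 = j - 1 := by ring
  have i12 : j - 1 - 2 = j - 3 := by ring
  have i13 : j + 2 - 1 = j + 1 := by ring
  have G : pdx (F j) = fun p => 3 * (b j p) ^ 2 * (B1 j p - B1 (j - 1) p)
      + B2 j p * (b (j + 2) p - b j p)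
      + B2 (j - 1) p * (b (j + 1) p - b (j - 1) p)
      + B2 (j - 2) p * (b j p - b (j - 2) p)
      + (B3 j p - B3 (j - 3) p)
      + (B1 j p * (b (j + 1) p - b j p) + B2 j p - B2 (j - 1) p) * (2 * b j p + b (j + 1) p)
      + B1 j p * (B1 j p - 2 * B1 (j - 1) p + B1 (j + 1) p)
      + (B1 (j - 1) p * (b j p - b (j - 1) p) + B2 (j - 1) p - B2 (j - 2) p)
        * (2 * b j p + b (j - 1) p)
      + B1 (j - 1) p * (2 * B1 j p - B1 (j - 1) p - B1 (j - 2) p) := by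
    funext ⟨u, v⟩
    have hF' : F j = _ := funext (hF j)
    rw [hF']
    have D := ((((((bx j u v).pow 3).add (B2x j u v)).add (B2x (j - 1) u v)).add
      (B2x (j - 2) u v)).add
      ((B1x j u v).mul (((bx j u v).const_mul 2).add (bx (j + 1) u v)))).add
      ((B1x (j - 1) u v).mul (((bx j u v).const_mul 2).add (bx (j - 1) u v)))
    refine D.deriv.trans ?_
    simp only [i1, i2, i3, i4, i5, i6, i7, i8, Pi.add_apply, Pi.pow_apply, Pi.mul_apply]
    push_cast
    ring
  rw [G]
  have b0 := bY j x y
  have bp := bY (j + 1) x y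
  have bpp := bY (j + 2) x y
  have bm := bY (j - 1) x y
  have bmm := bY (j - 2) x y
  have c0 := B1y j x y
  have cp := B1y (j + 1) x y
  have cm := B1y (j - 1) x y
  have cmm := B1y (j - 2) x y
  have g0 := B2y j x y
  have gm := B2y (j - 1) x y
  have gmm := B2y (j - 2) x y
  have k0 := B3y j x y
  have kmmm := B3y (j - 3) x y
  have D := (((((((((b0.pow 2).const_mul 3).mul (c0.sub cm)).add
    (g0.mul (bpp.sub b0))).add
    (gm.mul (bp.sub bm))).add
    (gmm.mul (b0.sub bmm))).add
    (k0.sub kmmm)).add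
    ((((c0.mul (bp.sub b0)).add g0).sub gm).mul ((b0.const_mul 2).add bp))).add
    (c0.mul ((c0.sub (cm.const_mul 2)).add cp))).add
    ((((cm.mul (b0.sub bm)).add gm).sub gmm).mul ((b0.const_mul 2).add bm))
  have D' := D.add (cm.mul (((c0.const_mul 2).sub cm).sub cmm))
  refine D'.deriv.trans ?_
  simp only [hF, i1, i2, i3, i4, i5, i6, i7, i8, i9, i10, i11, i12, i13,
    Pi.add_apply, Pi.pow_apply, Pi.mul_apply, Pi.sub_apply]
  push_cast
  ring
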